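/- arXiv:1303.5622 — 5 statements merged into one kernel-verified Lean document; each statement's English description precedes it below -/
import Mathlib

section
/- Let H be a graph of order k with nonincreasing degree sequence (h_1, …, h_k) and independence number α(H), and let π = (d_1, …, d_n) be a nonincreasing graphic sequence (with n ≥ k and all terms at least 1) that is NOT degree sufficient for H. Let j be the largest integer for which d_{k−j+1} < h_{k−j+1}. If j ≥ α(H)+1, then π is majorized by the sequence π̃_j(H,n). -/
/-!
The first `k - j` terms of `tildePi H j n` are `n - 1`, which bounds every degree of a graph on
`n` vertices. All later terms of `d` are at most `d_{k-j+1} ≤ h_{k-j+1} - 1`, so it suffices that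
`h_{k-j+1} ≤ k - j + ∇_j(H)`. To see this, let `s` be a set of `j` vertices of `H` whose induced
subgraph has maximum degree `∇_j(H)`. Its complement has only `k - j` vertices, so by pigeonhole
one of the `k - j + 1` vertices of largest degree lies in `s`. That vertex has degree at least
`h_{k-j+1}`, with at most `∇_j(H)` neighbours in `s` and at most `k - j` outside
(`gdeg_le_degOn_add`).
-/

/-- The degree of a vertex, defined via `Set.ncard` of the neighbor set
(avoids decidability assumptions). -/
noncomputable def gdeg {V : Type*} (G : SimpleGraph V) (v : V) : ℕ :=
  (G.neighborSet v).ncard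

/-- A sequence indexed by `Fin n` is graphic if some simple graph on `Fin n`
realizes it, vertex `v` having degree `d v`. -/
def IsGraphic {n : ℕ} (d : Fin n → ℕ) : Prop :=
  ∃ G : SimpleGraph (Fin n), ∀ v, gdeg G v = d v

/-- `h` is the degree sequence of `H` (up to relabelling of the vertices). -/
def HasDegSeq {k : ℕ} (H : SimpleGraph (Fin k)) (h : Fin k → ℕ) : Prop :=
  ∃ σ : Equiv.Perm (Fin k), ∀ i, gdeg H (σ i) = h i

/-- `G` contains a copy of `H` as a subgraph. -/
def ContainsSub {V W : Type*} (G : SimpleGraph V) (H : SimpleGraph W) : Prop :=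
  ∃ f : W → V, Function.Injective f ∧ ∀ ⦃u v : W⦄, H.Adj u v → G.Adj (f u) (f v)

/-- A graphic sequence `d` is potentially `H`-graphic if some realization of `d`
contains `H` as a subgraph. -/
def PotentiallyGraphic {n k : ℕ} (d : Fin n → ℕ) (H : SimpleGraph (Fin k)) : Prop :=
  ∃ G : SimpleGraph (Fin n), (∀ v, gdeg G v = d v) ∧ ContainsSub G H

/-- The independence number α(H). -/
noncomputable def alphaNum {k : ℕ} (H : SimpleGraph (Fin k)) : ℕ :=
  sSup {m | ∃ s : Finset (Fin k), s.card = m ∧ ∀ u ∈ s, ∀ v ∈ s, ¬ H.Adj u v}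

/-- The degree of `v` in the subgraph of `H` induced on `s`. -/
noncomputable def degOn {k : ℕ} (H : SimpleGraph (Fin k)) (s : Finset (Fin k)) (v : Fin k) : ℕ :=
  {u : Fin k | u ∈ s ∧ H.Adj v u}.ncard

/-- ∇_i(H) = min{Δ(F) : F an induced subgraph of H on i vertices}. -/
noncomputable def nablaDeg {k : ℕ} (H : SimpleGraph (Fin k)) (i : ℕ) : ℕ :=
  sInf {m | ∃ s : Finset (Fin k), s.card = i ∧
    m = sSup {e | ∃ v ∈ s, e = degOn H s v}}

/-- π̃_i(H,n) = ((n−1)^{k−i}, (k−i+∇_i(H)−1)^{n−k+i}), as a function `Fin n → ℕ`. -/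
noncomputable def tildePi {k : ℕ} (H : SimpleGraph (Fin k)) (i n : ℕ) : Fin n → ℕ :=
  fun t => if (t : ℕ) < k - i then n - 1 else k - i + nablaDeg H i - 1

/-- `s` majorizes `d` if `s` dominates `d` termwise. -/
def Majorizes {n : ℕ} (s d : Fin n → ℕ) : Prop := ∀ t, d t ≤ s t

/-- Replace each of the terms in (1-based) positions `a1,…,a2` of `d`
by the term in position `a2`. -/
def levelOff {n : ℕ} (d : Fin n → ℕ) (a1 a2 : ℕ) : Fin n → ℕ :=
  fun t => if h : a2 - 1 < n ∧ a1 ≤ (t : ℕ) + 1 ∧ (t : ℕ) + 1 ≤ a2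
    then d ⟨a2 - 1, h.1⟩ else d t

/-- `d` is ([a1,a2],b)-close to `s`: after leveling off positions `a1,…,a2` of `d`
and then subtracting a total of at most `b` from the terms, the resulting sequence
is majorized by `s`. -/
def CloseTo {n : ℕ} (d : Fin n → ℕ) (a1 a2 b : ℕ) (s : Fin n → ℕ) : Prop :=
  ∃ e : Fin n → ℕ, (∀ t, e t ≤ levelOff d a1 a2 t) ∧
    (∑ t, e t) ≤ b ∧ ∀ t, levelOff d a1 a2 t - e t ≤ s t

/-- i*(H): the smallest index i in {α(H)+1,…,k} minimizing 2i − ∇_i(H). -/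
noncomputable def istar {k : ℕ} (H : SimpleGraph (Fin k)) : ℕ :=
  sInf {i | alphaNum H + 1 ≤ i ∧ i ≤ k ∧
    ∀ l, alphaNum H + 1 ≤ l → l ≤ k → 2 * i - nablaDeg H i ≤ 2 * l - nablaDeg H l}

/-- Splitting the neighbours of `v` into those in `s` and those outside `s`. -/
lemma gdeg_le_degOn_add {k : ℕ} (H : SimpleGraph (Fin k)) (s : Finset (Fin k)) (v : Fin k) :
    gdeg H v ≤ degOn H s v + (k - s.card) := by
  have hc : ((sᶜ : Finset (Fin k)) : Set (Fin k)).ncard = k - s.card := by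
    rw [Set.ncard_coe_finset, Finset.card_compl, Fintype.card_fin]
  rw [← hc]
  refine (Set.ncard_le_ncard ?_ (Set.toFinite _)).trans (Set.ncard_union_le _ _)
  intro u hu
  by_cases hus : u ∈ s
  · exact Or.inl ⟨hus, hu⟩
  · exact Or.inr (by simpa using hus)

/-- The minimum defining `∇_j(H)` is attained, since `j ≤ k` makes the index set nonempty. -/
lemma exists_degOn_le_nablaDeg {k : ℕ} (H : SimpleGraph (Fin k)) {j : ℕ} (hjk : j ≤ k) :
    ∃ s : Finset (Fin k), s.card = j ∧ ∀ v ∈ s, degOn H s v ≤ nablaDeg H j := by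
  obtain ⟨s₀, -, hs₀⟩ := Finset.exists_subset_card_eq
    (s := (Finset.univ : Finset (Fin k))) (n := j) (by simpa using hjk)
  obtain ⟨s, hs, hm⟩ := Nat.sInf_mem (s := {m | ∃ s : Finset (Fin k), s.card = j ∧
    m = sSup {e | ∃ v ∈ s, e = degOn H s v}}) ⟨_, s₀, hs₀, rfl⟩
  refine ⟨s, hs, fun v hv => ?_⟩
  change degOn H s v ≤ sInf _
  rw [hm]
  refine le_csSup ?_ ⟨v, hv, rfl⟩
  refine Set.Finite.bddAbove ((s.finite_toSet.image (degOn H s)).subset ?_)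
  rintro e ⟨w, hw, rfl⟩
  exact ⟨w, hw, rfl⟩

lemma degSeq_le_nablaDeg {k : ℕ} (H : SimpleGraph (Fin k)) (h : Fin k → ℕ) (hmono : Antitone h)
    (hdeg : HasDegSeq H h) {j : ℕ} (hjk : j ≤ k) (hlt : k - j < k) :
    h ⟨k - j, hlt⟩ ≤ k - j + nablaDeg H j := by
  obtain ⟨σ, hσ⟩ := hdeg
  obtain ⟨s, hs, hle⟩ := exists_degOn_le_nablaDeg H hjk
  obtain ⟨i, hi, his⟩ : ∃ i : Fin k, i ≤ ⟨k - j, hlt⟩ ∧ σ i ∈ s := by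
    by_contra! hno
    have hsub : (Finset.Iic (⟨k - j, hlt⟩ : Fin k)).map σ.toEmbedding ⊆ sᶜ := by
      intro v hv
      obtain ⟨i, hi, rfl⟩ := Finset.mem_map.1 hv
      exact Finset.mem_compl.2 (hno i (Finset.mem_Iic.1 hi))
    have := Finset.card_le_card hsub
    rw [Finset.card_map, Finset.card_compl, Fin.card_Iic, Fintype.card_fin, hs] at this
    simp at this
  have h1 := hmono hi
  have h2 := gdeg_le_degOn_add H s (σ i)
  have h3 := hle _ his
  rw [hσ, hs] at h2
  omega

lemma gdeg_le_sub_one {n : ℕ} (G : SimpleGraph (Fin n)) (v : Fin n) : gdeg G v ≤ n - 1 := by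
  have hsub : G.neighborSet v ⊆ ((Finset.univ.erase v : Finset (Fin n)) : Set (Fin n)) := by
    intro u hu
    simpa using (G.ne_of_adj hu).symm
  have := Set.ncard_le_ncard hsub (Set.toFinite _)
  rwa [Set.ncard_coe_finset, Finset.card_erase_of_mem (Finset.mem_univ v), Finset.card_univ,
    Fintype.card_fin] at this

/-- If π is a graphic sequence that is not degree sufficient for H, and
j is the largest integer with d_{k-j+1} < h_{k-j+1}, and j ≥ α(H)+1, then π is
majorized by π̃_j(H,n). -/
theorem stmt_0 {k n : ℕ} (hk : 1 ≤ k) (hkn : k ≤ n)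
    (H : SimpleGraph (Fin k)) (h : Fin k → ℕ) (hmono : Antitone h)
    (hdeg : HasDegSeq H h)
    (d : Fin n → ℕ) (dmono : Antitone d) (dpos : ∀ t, 1 ≤ d t)
    (dgr : IsGraphic d)
    (hnds : ¬ ∀ i : Fin k, h i ≤ d (Fin.castLE hkn i))
    (j : ℕ) (hj1 : 1 ≤ j) (hjk : j ≤ k)
    (hjfail : d ⟨k - j, by omega⟩ < h ⟨k - j, by omega⟩)
    (hjmax : ∀ j' (_ : j < j') (_ : j' ≤ k),
      h ⟨k - j', by omega⟩ ≤ d ⟨k - j', by omega⟩)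
    (hja : alphaNum H + 1 ≤ j) :
    Majorizes (tildePi H j n) d := by
  intro t
  unfold tildePi
  split_ifs with ht
  · obtain ⟨G, hG⟩ := dgr
    exact hG t ▸ gdeg_le_sub_one G t
  · have h1 : d t ≤ d ⟨k - j, by omega⟩ := dmono (not_lt.1 ht)
    have h2 := degSeq_le_nablaDeg H h hmono hdeg hjk (by omega)
    omega
end

section
/- Let H be a graph with nonincreasing degree sequence (h_1, …, h_k), and let π = (d_1, …, d_n) be a nonincreasing graphic sequence with d_1 ≤ M such that there exist indices i_1, …, i_k with d_{i_j} ≥ h_j for all 1 ≤ j ≤ k. If π has at least 2M² + k positive terms, then there is a realization G of π containing a copy of H in which, for each j, the vertex playing the role of the j-th vertex of H (in nonincreasing degree order in H) has degree d_{i_j} in G. -/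
section Degrees

open SimpleGraph

variable {V : Type*} [Fintype V] [DecidableEq V]

lemma gdeg_eq_card (G : SimpleGraph V) [DecidableRel G.Adj] (v : V) :
    gdeg G v = (G.neighborFinset v).card := by
  rw [gdeg, Set.ncard_eq_toFinset_card', neighborFinset]

lemma gdeg_sup_edge (G : SimpleGraph V) {s t : V} (hst : s ≠ t) (h : ¬ G.Adj s t) (v : V) :
    gdeg (G ⊔ edge s t) v = gdeg G v + ((if v = s then 1 else 0) + if v = t then 1 else 0) := by
  classical
  have h' : ¬ G.Adj t s := fun e => h e.symm
  unfold gdeg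
  by_cases hs : v = s
  · subst hs
    have : (G ⊔ edge v t).neighborSet v = insert t (G.neighborSet v) := by
      ext w; simp only [mem_neighborSet, sup_adj, edge_adj, Set.mem_insert_iff]; grind
    rw [this, Set.ncard_insert_of_notMem (by simpa using h)]
    simp [hst]
  · by_cases ht : v = t
    · subst ht
      have : (G ⊔ edge s v).neighborSet v = insert s (G.neighborSet v) := by
        ext w; simp only [mem_neighborSet, sup_adj, edge_adj, Set.mem_insert_iff]; grind
      rw [this, Set.ncard_insert_of_notMem (by simpa using h')]
      simp [hs]
    · have : (G ⊔ edge s t).neighborSet v = G.neighborSet v := by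
        ext w; simp only [mem_neighborSet, sup_adj, edge_adj]; grind
      simp [this, hs, ht]

lemma gdeg_sdiff_edge (G : SimpleGraph V) {s t : V} (h : G.Adj s t) (v : V) :
    gdeg G v =
      gdeg (G \ edge s t) v + ((if v = s then 1 else 0) + if v = t then 1 else 0) := by
  have hG : G = (G \ edge s t) ⊔ edge s t := by
    rw [sdiff_sup_cancel]
    intro u w huw
    rw [edge_adj] at huw
    rcases huw with ⟨⟨rfl, rfl⟩ | ⟨rfl, rfl⟩, -⟩
    exacts [h, h.symm]
  conv_lhs => rw [hG]
  exact gdeg_sup_edge _ h.ne (by simp [edge_adj, h.ne]) v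

end Degrees

/-- If `b` is a `K`-neighbour but not a `G`-neighbour of `a`, while `a` has at least as many
`G`-neighbours as `K`-neighbours, then `a` has a `G`-neighbour which is not a `K`-neighbour. -/
lemma exists_adj_not_adj {V : Type*} [Fintype V] {G K : SimpleGraph V} {a b : V}
    (hK : K.Adj a b) (hG : ¬ G.Adj a b) (hdeg : gdeg K a ≤ gdeg G a) :
    ∃ x, G.Adj a x ∧ ¬ K.Adj a x := by
  by_contra! hcon
  have hss : G.neighborSet a ⊂ K.neighborSet a :=
    ⟨fun x hx => hcon x hx, fun hsub => hG (hsub hK)⟩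
  exact absurd hdeg (not_le.2 (Set.ncard_lt_ncard hss (Set.toFinite _)))

section Switching

open SimpleGraph

variable {V : Type*} [Fintype V] [DecidableEq V]

/-- The exchange of `ax, by` for `ab, xy`. -/
lemma two_switch {G K : SimpleGraph V} {a b x y : V}
    (hab : ¬ G.Adj a b) (hne : a ≠ b) (hax : G.Adj a x) (hby : G.Adj b y)
    (hKax : ¬ K.Adj a x) (hKby : ¬ K.Adj b y) (hxy : x ≠ y) (hGxy : ¬ G.Adj x y) :
    ∃ G' : SimpleGraph V, (∀ v, gdeg G' v = gdeg G v) ∧ G ⊓ K ≤ G' ∧ G'.Adj a b := by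
  have hxb : x ≠ b := fun e => hab (e ▸ hax)
  have hya : y ≠ a := fun e => hab (e ▸ hby).symm
  have nax := hax.ne
  have nby := hby.ne
  refine ⟨((G \ edge a x) \ edge b y) ⊔ edge a b ⊔ edge x y, fun v => ?_, ?_, ?_⟩
  · have h1 := gdeg_sdiff_edge G hax v
    have h2 := gdeg_sdiff_edge (G \ edge a x) (s := b) (t := y)
      (by simp only [sdiff_adj, edge_adj]; grind) v
    have h3 := gdeg_sup_edge ((G \ edge a x) \ edge b y) hne
      (by simp only [sdiff_adj, edge_adj]; grind) v
    have h4 := gdeg_sup_edge (((G \ edge a x) \ edge b y) ⊔ edge a b) hxy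
      (by simp only [sdiff_adj, sup_adj, edge_adj]; grind) v
    omega
  · intro u w huw
    obtain ⟨h1, h2⟩ := huw
    have h3 := h2.symm
    simp only [sdiff_adj, sup_adj, edge_adj]
    grind
  · simp [edge_adj, hne]

/-- The exchange of `ax, by, pq` for `ab, xp, yq`; here `x = y` is allowed. -/
lemma three_switch {G K : SimpleGraph V} {a b x y p q : V}
    (hab : ¬ G.Adj a b) (hne : a ≠ b) (hax : G.Adj a x) (hby : G.Adj b y) (hpq : G.Adj p q)
    (hKax : ¬ K.Adj a x) (hKby : ¬ K.Adj b y) (hKpq : ¬ K.Adj p q)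
    (hpa : p ≠ a) (hpb : p ≠ b) (hpx : p ≠ x) (hpy : p ≠ y)
    (hqa : q ≠ a) (hqb : q ≠ b) (hqx : q ≠ x) (hqy : q ≠ y)
    (hxp : ¬ G.Adj x p) (hyq : ¬ G.Adj y q) :
    ∃ G' : SimpleGraph V, (∀ v, gdeg G' v = gdeg G v) ∧ G ⊓ K ≤ G' ∧ G'.Adj a b := by
  have hxb : x ≠ b := fun e => hab (e ▸ hax)
  have hya : y ≠ a := fun e => hab (e ▸ hby).symm
  have nax := hax.ne
  have nby := hby.ne
  have npq := hpq.ne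
  refine ⟨(((G \ edge a x) \ edge b y) \ edge p q) ⊔ edge a b ⊔ edge x p ⊔ edge y q,
    fun v => ?_, ?_, ?_⟩
  · have h1 := gdeg_sdiff_edge G hax v
    have h2 := gdeg_sdiff_edge (G \ edge a x) (s := b) (t := y)
      (by simp only [sdiff_adj, edge_adj]; grind) v
    have h3 := gdeg_sdiff_edge ((G \ edge a x) \ edge b y) (s := p) (t := q)
      (by simp only [sdiff_adj, edge_adj]; grind) v
    have h4 := gdeg_sup_edge (((G \ edge a x) \ edge b y) \ edge p q) hne
      (by simp only [sdiff_adj, edge_adj]; grind) v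
    have h5 := gdeg_sup_edge ((((G \ edge a x) \ edge b y) \ edge p q) ⊔ edge a b) hpx.symm
      (by simp only [sdiff_adj, sup_adj, edge_adj]; grind) v
    have h6 := gdeg_sup_edge ((((G \ edge a x) \ edge b y) \ edge p q) ⊔ edge a b ⊔ edge x p)
      hqy.symm (by simp only [sdiff_adj, sup_adj, edge_adj]; grind) v
    omega
  · intro u w huw
    obtain ⟨h1, h2⟩ := huw
    have h3 := h2.symm
    simp only [sdiff_adj, sup_adj, edge_adj]
    grind
  · simp [edge_adj, hne]

/-- A graph with maximum degree at most `M` and sufficiently many non-isolated vertices has an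
edge `pq` to which `three_switch` applies, provided `x` and `y` are equal or adjacent. -/
lemma exists_far_edge {G : SimpleGraph V} {S : Finset V} {M : ℕ} {a b x y : V}
    (hM : ∀ v, gdeg G v ≤ M)
    (hpos : 2 * M ^ 2 + S.card ≤ (Finset.univ.filter (fun v => 1 ≤ gdeg G v)).card)
    (haS : a ∈ S) (hbS : b ∈ S) (hne : a ≠ b) (hab : ¬ G.Adj a b)
    (hax : G.Adj a x) (hby : G.Adj b y) (hxy : x = y ∨ G.Adj x y) :
    ∃ p q, p ∉ S ∧ G.Adj p q ∧ p ≠ x ∧ p ≠ y ∧ q ≠ a ∧ q ≠ b ∧ q ≠ x ∧ q ≠ y ∧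
      ¬ G.Adj x p ∧ ¬ G.Adj y q := by
  classical
  have hN : ∀ v, (G.neighborFinset v).card ≤ M := fun v => gdeg_eq_card G v ▸ hM v
  have hE : ∀ v w, G.Adj v w → ((G.neighborFinset v).erase w).card ≤ M - 1 := by
    intro v w h
    rw [Finset.card_erase_of_mem (by simpa using h)]
    exact Nat.sub_le_sub_right (hN v) 1
  -- `x` is adjacent to `a` and to a second vertex: `b` if `x = y`, and `y` otherwise.
  have hM2 : 2 ≤ M := by
    obtain ⟨c, hc, hac⟩ : ∃ c, G.Adj x c ∧ a ≠ c := by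
      rcases hxy with rfl | h
      · exact ⟨b, hby.symm, hne⟩
      · exact ⟨y, h, fun e => hab (e ▸ hby).symm⟩
    refine le_trans ?_ (hN x)
    rw [← Finset.card_pair hac]
    refine Finset.card_le_card fun z hz => ?_
    rcases Finset.mem_insert.1 hz with rfl | hz
    · simpa using hax.symm
    · rw [Finset.mem_singleton.1 hz]; simpa using hc
  let B : Finset V := (G.neighborFinset x).erase a ∪ (G.neighborFinset y).erase b ∪
    G.neighborFinset a ∪ {y} ∪
    (G.neighborFinset y).biUnion fun w => (G.neighborFinset w).erase y
  have hB : B.card ≤ (M - 1) + (M - 1) + M + 1 + M * (M - 1) := by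
    refine (Finset.card_union_le _ _).trans (add_le_add ?_ ?_)
    · refine (Finset.card_union_le _ _).trans (add_le_add ?_ (by simp))
      refine (Finset.card_union_le _ _).trans (add_le_add ?_ (hN a))
      exact (Finset.card_union_le _ _).trans
        (add_le_add (hE x a hax.symm) (hE y b hby.symm))
    · refine (Finset.card_biUnion_le_card_mul _ _ (M - 1) fun w hw => ?_).trans
        (Nat.mul_le_mul_right _ (hN y))
      exact hE w y (by simpa [G.adj_comm] using hw)
  have hlt : (B ∪ S).card < (Finset.univ.filter (fun v => 1 ≤ gdeg G v)).card := by
    refine lt_of_lt_of_le ?_ hpos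
    refine lt_of_le_of_lt (Finset.card_union_le _ _) (Nat.add_lt_add_right ?_ _)
    refine lt_of_le_of_lt hB ?_
    obtain ⟨m, rfl⟩ := Nat.exists_eq_add_of_le hM2
    have : 2 + m - 1 = m + 1 := by omega
    rw [this]
    nlinarith
  obtain ⟨p, hp, hpB⟩ := Finset.exists_mem_notMem_of_card_lt_card hlt
  obtain ⟨q, hq⟩ : ∃ q, G.Adj p q := by
    have h1 : 0 < (G.neighborFinset p).card := by
      rw [← gdeg_eq_card]; exact (Finset.mem_filter.1 hp).2
    obtain ⟨q, hq⟩ := Finset.card_pos.1 h1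
    exact ⟨q, by simpa using hq⟩
  simp only [B, Finset.mem_union, Finset.mem_erase, mem_neighborFinset, Finset.mem_singleton,
    Finset.mem_biUnion, not_or, not_and, not_exists] at hpB
  obtain ⟨⟨⟨⟨⟨h1, h2⟩, h3⟩, h4⟩, h5⟩, hpS⟩ := hpB
  have hpa : p ≠ a := fun e => hpS (e ▸ haS)
  have hpb : p ≠ b := fun e => hpS (e ▸ hbS)
  refine ⟨p, q, hpS, hq, fun e => h3 (e ▸ hax), h4, fun e => h3 (e ▸ hq.symm),
    fun e => h5 b hby.symm h4 (e ▸ hq.symm), fun e => h1 hpa (e ▸ hq.symm),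
    fun e => h2 hpb (e ▸ hq.symm), h1 hpa, fun h => h5 q h h4 hq.symm⟩

end Switching

/-- A degree sequence bounded by `M` with at least `2 * M ^ 2 + S.card` positive terms has a
realization containing a given graph `K` supported on `S`, as soon as it dominates the degrees
of `K`. -/
lemma exists_realization_ge {V : Type*} [Fintype V] [DecidableEq V] {K : SimpleGraph V}
    {S : Finset V} {M : ℕ} {d : V → ℕ} (hS : ∀ u v, K.Adj u v → u ∈ S)
    (hgr : ∃ G : SimpleGraph V, ∀ v, gdeg G v = d v) (hK : ∀ v, gdeg K v ≤ d v)
    (hM : ∀ v, d v ≤ M)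
    (hpos : 2 * M ^ 2 + S.card ≤ (Finset.univ.filter (fun v => 1 ≤ d v)).card) :
    ∃ G : SimpleGraph V, (∀ v, gdeg G v = d v) ∧ K ≤ G := by
  obtain ⟨G, hG, hmax⟩ :=
    (Set.toFinite {G : SimpleGraph V | ∀ v, gdeg G v = d v}).exists_maximalFor
    (fun G => G ⊓ K) _ hgr
  refine ⟨G, hG, fun a b hKab => ?_⟩
  by_contra hab
  have hd : ∀ v, gdeg K v ≤ gdeg G v := fun v => (hK v).trans (hG v).ge
  obtain ⟨x, hax, hKax⟩ := exists_adj_not_adj hKab hab (hd a)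
  obtain ⟨y, hby, hKby⟩ := exists_adj_not_adj hKab.symm (fun h => hab h.symm) (hd b)
  obtain ⟨G', hdeg, hle, hG'ab⟩ :
      ∃ G' : SimpleGraph V, (∀ v, gdeg G' v = gdeg G v) ∧ G ⊓ K ≤ G' ∧ G'.Adj a b := by
    by_cases hxy : x = y ∨ G.Adj x y
    · obtain ⟨p, q, hpS, hpq, hpx, hpy, hqa, hqb, hqx, hqy, hxp, hyq⟩ :=
        exists_far_edge (S := S) (M := M) (fun v => (hG v).trans_le (hM v))
          (by simpa only [show ∀ v, gdeg G v = d v from hG] using hpos) (hS _ _ hKab) (hS _ _ hKab.symm) hKab.ne hab hax hby hxy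
      exact three_switch hab hKab.ne hax hby hpq hKax hKby (fun h => hpS (hS _ _ h))
        (fun e => hpS (e ▸ hS _ _ hKab)) (fun e => hpS (e ▸ hS _ _ hKab.symm))
        hpx hpy hqa hqb hqx hqy hxp hyq
    · rw [not_or] at hxy
      exact two_switch hab hKab.ne hax hby hKax hKby hxy.1 hxy.2
  have hback : G' ⊓ K ≤ G ⊓ K :=
    hmax (j := G') (fun v => (hdeg v).trans (hG v)) (le_inf hle inf_le_right)
  exact hab (hback (show (G' ⊓ K).Adj a b from ⟨hG'ab, hKab⟩)).1

/-- If π has maximum term d_1 ≤ M, there are (distinct) indices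
i_1,…,i_k with d_{i_j} ≥ h_j (where (h_1,…,h_k) is the nonincreasing degree
sequence of H), and π has at least 2M² + k positive terms, then π has a
realization G containing a copy of H in which the j-th vertex of H is placed
on the vertex of degree d_{i_j}. -/
theorem stmt_5 {k n M : ℕ} (hk : 1 ≤ k) (hkn : k ≤ n)
    (H : SimpleGraph (Fin k)) (hHmono : Antitone (fun i : Fin k => gdeg H i))
    (d : Fin n → ℕ) (dmono : Antitone d) (dgr : IsGraphic d)
    (hM : d ⟨0, by omega⟩ ≤ M)
    (ι : Fin k → Fin n) (hι : Function.Injective ι)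
    (hbig : ∀ j : Fin k, gdeg H j ≤ d (ι j))
    (hpos : 2 * M ^ 2 + k ≤ (Finset.univ.filter (fun t : Fin n => 1 ≤ d t)).card) :
    ∃ G : SimpleGraph (Fin n), (∀ v, gdeg G v = d v) ∧
      ∀ u v : Fin k, H.Adj u v → G.Adj (ι u) (ι v) := by
  have hS : ∀ u v, (H.map ι).Adj u v → u ∈ Finset.univ.image ι := by
    rintro u v ⟨-, u', v', -, rfl, rfl⟩
    exact Finset.mem_image_of_mem _ (Finset.mem_univ _)
  have hdeg : ∀ v, gdeg (H.map ι) v ≤ d v := by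
    intro v
    by_cases hv : ∃ j, ι j = v
    · obtain ⟨j, rfl⟩ := hv
      refine le_trans ?_ (hbig j)
      have hsub : (H.map ι).neighborSet (ι j) ⊆ ι '' H.neighborSet j := by
        rintro w ⟨-, u', v', h, hu, rfl⟩
        exact ⟨v', hι hu ▸ h, rfl⟩
      exact (Set.ncard_le_ncard hsub (Set.toFinite _)).trans (Set.ncard_image_le (Set.toFinite _))
    · have hempty : (H.map ι).neighborSet v = ∅ := by
        refine Set.eq_empty_of_forall_notMem ?_
        rintro w ⟨-, u', v', -, hu, -⟩
        exact hv ⟨u', hu⟩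
      simp [gdeg, hempty]
  obtain ⟨G, hG, hle⟩ := exists_realization_ge (M := M) hS dgr hdeg
    (fun v => (dmono (Fin.mk_le_of_le_val (Nat.zero_le _))).trans hM)
    (by simpa [Finset.card_image_of_injective _ hι] using hpos)
  exact ⟨G, hG, fun u v h => hle ⟨fun e => h.ne (hι e), u, v, h, rfl, rfl⟩⟩
end

section
/- Let H be a graph of order k with at least one nontrivial connected component, with nonincreasing degree sequence (h_1, …, h_k) and independence number α(H). Then for every i with α(H)+1 ≤ i ≤ k, one has h_{k−i+1} ≤ k − i + ∇_i(H). -/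
/-- For a graph H of order k with at least one nontrivial component
and nonincreasing degree sequence (h_1,…,h_k): for every i with
α(H)+1 ≤ i ≤ k, one has h_{k−i+1} ≤ k − i + ∇_i(H). -/
theorem stmt_6 {k : ℕ} (H : SimpleGraph (Fin k)) (hEdge : ∃ u v, H.Adj u v)
    (h : Fin k → ℕ) (hmono : Antitone h) (hdeg : HasDegSeq H h) :
    ∀ i (_ : alphaNum H + 1 ≤ i) (_ : i ≤ k),
      h ⟨k - i, by omega⟩ ≤ k - i + nablaDeg H i := by
  intro i hi hik
  -- `nablaDeg` is an infimum over a nonempty set, so some `i`-set `s` attains it.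
  have hne : {m | ∃ s : Finset (Fin k), s.card = i ∧
      m = sSup {e | ∃ v ∈ s, e = degOn H s v}}.Nonempty := by
    obtain ⟨s, -, hs⟩ := Finset.exists_subset_card_eq
      (s := (Finset.univ : Finset (Fin k))) (n := i) (by simpa using hik)
    exact ⟨_, s, hs, rfl⟩
  obtain ⟨s, hs, hmin⟩ := Nat.sInf_mem hne
  obtain ⟨σ, hσ⟩ := hdeg
  have hlt : k - i < k := by omega
  -- The `k - i + 1` vertices of highest degree cannot all avoid `s`.
  obtain ⟨v, hvT, hvs⟩ : ∃ v ∈ (Finset.Iic (⟨k - i, hlt⟩ : Fin k)).map σ.toEmbedding,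
      v ∈ s := by
    rw [← Finset.not_disjoint_iff]
    intro hdis
    have h1 := Finset.card_le_univ ((Finset.Iic (⟨k - i, hlt⟩ : Fin k)).map σ.toEmbedding ∪ s)
    rw [Finset.card_union_of_disjoint hdis, Finset.card_map, Fin.card_Iic, hs,
      Fintype.card_fin] at h1
    simp only at h1
    omega
  obtain ⟨j, hj, rfl⟩ := Finset.mem_map.mp hvT
  have hdj : gdeg H (σ j) = h j := hσ j
  have h1 : h ⟨k - i, hlt⟩ ≤ h j := hmono (Finset.mem_Iic.mp hj)
  have h2 : degOn H s (σ j) ≤ nablaDeg H i := by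
    have hbdd : BddAbove {e | ∃ v ∈ s, e = degOn H s v} := by
      refine ((s.image (degOn H s)).finite_toSet.subset ?_).bddAbove
      rintro e ⟨v, hv, rfl⟩
      exact Finset.mem_coe.mpr (Finset.mem_image_of_mem _ hv)
    exact (le_csSup hbdd ⟨σ j, hvs, rfl⟩).trans_eq hmin.symm
  have h3 := gdeg_le_degOn_add H s (σ j)
  rw [hs] at h3
  change h ⟨k - i, hlt⟩ ≤ _
  omega
end

section
/- Let k ≥ 4 and let n be sufficiently large (say n ≥ 4k²). The n-term sequence π_k = (n−1, (2k−5)^{2k−3}, 1^{n−2k+2}), i.e., one term equal to n−1, followed by 2k−3 terms equal to 2k−5, followed by n−2k+2 terms equal to 1, is a graphic sequence that is degree sufficient for the complete graph K_k but is not potentially K_k-graphic: no realization of π_k contains K_k as a subgraph. -/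
/-- π_k = (n−1, (2k−5)^{2k−3}, 1^{n−2k+2}), 0-indexed on `Fin n`. -/
def pik (k n : ℕ) : Fin n → ℕ := fun t =>
  if (t : ℕ) = 0 then n - 1 else if (t : ℕ) ≤ 2 * k - 3 then 2 * k - 5 else 1


/-- The realization of `pik k n` used for graphicness, where `m = 2k - 3`: vertex `0` is universal,
the core `1, …, m` carries the complement of the cycle `1, 2, …, m, 1`, and the vertices beyond `m`
are leaves attached to `0`. -/
def coreGraph (m n : ℕ) : SimpleGraph (Fin n) where
  Adj u v := u ≠ v ∧ ((u : ℕ) = 0 ∨ (v : ℕ) = 0 ∨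
    ((u : ℕ) ≤ m ∧ (v : ℕ) ≤ m ∧ (u : ℕ) + 1 ≠ v ∧ (v : ℕ) + 1 ≠ u ∧
      ¬ ((u : ℕ) = 1 ∧ (v : ℕ) = m) ∧ ¬ ((u : ℕ) = m ∧ (v : ℕ) = 1)))
  symm := ⟨fun u v h => by
    obtain ⟨h1, h2⟩ := h
    exact ⟨h1.symm, by tauto⟩⟩
  loopless := ⟨fun u h => h.1 rfl⟩

theorem pik_graphic {k n : ℕ} (hk : 4 ≤ k) (hn : 2 * k - 3 < n) : IsGraphic (pik k n) := by
  refine ⟨coreGraph (2 * k - 3) n, fun v => ?_⟩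
  obtain ⟨v, hv⟩ := v
  unfold gdeg pik
  dsimp only
  split_ifs with h0 h1
  · have : (coreGraph (2 * k - 3) n).neighborSet ⟨v, hv⟩
        = ((Finset.univ.erase ⟨v, hv⟩ : Finset (Fin n)) : Set (Fin n)) := by
      ext w
      simp [coreGraph, h0, eq_comm]
    rw [this, Set.ncard_coe_finset, Finset.card_erase_of_mem (Finset.mem_univ _)]
    simp
  · -- The neighbours of a core vertex: all of `0, …, m` except itself and the two cyclic neighbours.
    let p : Fin n := if v = 1 then ⟨2 * k - 3, hn⟩ else ⟨v - 1, by omega⟩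
    let s : Fin n := if hvm : v = 2 * k - 3 then ⟨1, by omega⟩ else ⟨v + 1, by omega⟩
    have hp : (p : ℕ) = if v = 1 then 2 * k - 3 else v - 1 := by
      simp only [p]; split_ifs <;> rfl
    have hs : (s : ℕ) = if v = 2 * k - 3 then 1 else v + 1 := by
      simp only [s]; split_ifs <;> rfl
    have hset : (coreGraph (2 * k - 3) n).neighborSet ⟨v, hv⟩
        = ((((Finset.Iic ⟨2 * k - 3, hn⟩).erase ⟨v, hv⟩).erase p).erase s : Finset (Fin n)) := by
      ext w
      simp only [SimpleGraph.mem_neighborSet, coreGraph, Finset.coe_erase, Set.mem_sdiff,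
        Set.mem_singleton_iff, Finset.mem_coe, Finset.mem_Iic, Fin.le_def, Fin.ext_iff,
        ne_eq, hp, hs]
      split_ifs <;> omega
    have hps : s ≠ p := by
      rw [ne_eq, Fin.ext_iff, hp, hs]
      split_ifs <;> omega
    have hpv : p ≠ ⟨v, hv⟩ := by
      rw [ne_eq, Fin.ext_iff, hp]
      dsimp only
      split_ifs <;> omega
    have hsv : s ≠ ⟨v, hv⟩ := by
      rw [ne_eq, Fin.ext_iff, hs]
      dsimp only
      split_ifs <;> omega
    have hvI : (⟨v, hv⟩ : Fin n) ∈ Finset.Iic (⟨2 * k - 3, hn⟩ : Fin n) := by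
      simpa [Fin.le_def] using h1
    have hpI : p ∈ Finset.Iic (⟨2 * k - 3, hn⟩ : Fin n) := by
      rw [Finset.mem_Iic, Fin.le_def, hp]
      dsimp only
      split_ifs <;> omega
    have hsI : s ∈ Finset.Iic (⟨2 * k - 3, hn⟩ : Fin n) := by
      rw [Finset.mem_Iic, Fin.le_def, hs]
      dsimp only
      split_ifs <;> omega
    rw [hset, Set.ncard_coe_finset, Finset.card_erase_of_mem, Finset.card_erase_of_mem,
      Finset.card_erase_of_mem hvI, Fin.card_Iic]
    · dsimp only
      omega
    · exact Finset.mem_erase.2 ⟨hpv, hpI⟩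
    · exact Finset.mem_erase.2 ⟨hps, Finset.mem_erase.2 ⟨hsv, hsI⟩⟩
  · have : (coreGraph (2 * k - 3) n).neighborSet ⟨v, hv⟩ = {⟨0, by omega⟩} := by
      ext w
      simp only [SimpleGraph.mem_neighborSet, coreGraph, Set.mem_singleton_iff, Fin.ext_iff, ne_eq]
      omega
    rw [this, Set.ncard_singleton]

/-- Let `A` and `B` consist of `k - 1` and `k - 2` vertices of degree `2k - 5`, with `z` adjacent to
all of `A` and the vertices of `B` having no neighbours outside `{z} ∪ A ∪ B`. Then `A` is not a
clique: count the edges between `A` and `B` from both sides. -/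
theorem no_core_clique {V : Type*} [Fintype V] [DecidableEq V] (G : SimpleGraph V)
    [DecidableRel G.Adj] {k : ℕ} (hk : 4 ≤ k) (z : V) (A B : Finset V) (hAB : Disjoint A B)
    (hzA : z ∉ A) (hzB : z ∉ B) (hA : A.card = k - 1) (hB : B.card = k - 2)
    (hdegA : ∀ v ∈ A, G.degree v = 2 * k - 5) (hdegB : ∀ v ∈ B, G.degree v = 2 * k - 5)
    (hz : ∀ v ∈ A, G.Adj v z) (hnbr : ∀ v ∈ B, ∀ w, G.Adj v w → w = z ∨ w ∈ A ∨ w ∈ B) :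
    ¬ ∀ u ∈ A, ∀ v ∈ A, u ≠ v → G.Adj u v := by
  intro hcl
  have h1 : ∀ v ∈ A, (B.bipartiteAbove G.Adj v).card ≤ k - 4 := by
    intro v hv
    have hsub : insert z (A.erase v ∪ B.bipartiteAbove G.Adj v) ⊆ G.neighborFinset v := by
      intro w hw
      rw [SimpleGraph.mem_neighborFinset]
      simp only [Finset.mem_insert, Finset.mem_union, Finset.mem_erase,
        Finset.mem_bipartiteAbove] at hw
      rcases hw with rfl | ⟨hne, hw⟩ | ⟨-, hw⟩
      · exact hz v hv
      · exact hcl v hv w hw hne.symm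
      · exact hw
    have hc := Finset.card_le_card hsub
    rw [Finset.card_insert_of_notMem, Finset.card_union_of_disjoint, Finset.card_erase_of_mem hv,
      SimpleGraph.card_neighborFinset_eq_degree, hdegA v hv] at hc
    · omega
    · exact hAB.mono (Finset.erase_subset _ _) (Finset.filter_subset _ _)
    · simp [hzA, hzB]
  have h2 : ∀ v ∈ B, k - 3 ≤ (A.bipartiteBelow G.Adj v).card := by
    intro v hv
    have hsub : G.neighborFinset v ⊆ insert z (B.erase v ∪ A.bipartiteBelow G.Adj v) := by
      intro w hw
      rw [SimpleGraph.mem_neighborFinset] at hw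
      simp only [Finset.mem_insert, Finset.mem_union, Finset.mem_erase,
        Finset.mem_bipartiteBelow]
      rcases hnbr v hv w hw with h | h | h
      · exact Or.inl h
      · exact Or.inr (Or.inr ⟨h, hw.symm⟩)
      · exact Or.inr (Or.inl ⟨hw.ne', h⟩)
    have hc := (Finset.card_le_card hsub).trans (Finset.card_insert_le _ _)
    have hu := Finset.card_union_le (B.erase v) (A.bipartiteBelow G.Adj v)
    rw [SimpleGraph.card_neighborFinset_eq_degree, hdegB v hv] at hc
    rw [Finset.card_erase_of_mem hv] at hu
    omega
  have key := Finset.sum_card_bipartiteAbove_eq_sum_card_bipartiteBelow (s := A) (t := B) G.Adj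
  have h3 := Finset.sum_le_card_nsmul A _ _ h1
  have h4 := Finset.card_nsmul_le_sum B _ _ h2
  rw [hA, smul_eq_mul] at h3
  rw [hB, smul_eq_mul] at h4
  obtain ⟨j, rfl⟩ := Nat.exists_eq_add_of_le' hk
  simp only [show j + 4 - 1 = j + 3 by omega, show j + 4 - 2 = j + 2 by omega,
    show j + 4 - 3 = j + 1 by omega, show j + 4 - 4 = j by omega] at h3 h4
  nlinarith

theorem pik_not_potentially {k n : ℕ} (hk : 4 ≤ k) (hn : 2 * k - 3 < n) :
    ¬ PotentiallyGraphic (pik k n) (⊤ : SimpleGraph (Fin k)) := by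
  classical
  rintro ⟨G, hdeg, f, hf, hadj⟩
  have hdeg' : ∀ v, G.degree v = pik k n v := by
    intro v
    rw [← hdeg v, gdeg, ← SimpleGraph.card_neighborFinset_eq_degree, ← Set.ncard_coe_finset,
      SimpleGraph.coe_neighborFinset]
  let z : Fin n := ⟨0, by omega⟩
  have hz : ∀ v, v ≠ z → G.Adj v z := by
    intro v hv
    have hsub : G.neighborFinset z ⊆ Finset.univ.erase z := by
      intro w hw
      rw [SimpleGraph.mem_neighborFinset] at hw
      exact Finset.mem_erase.2 ⟨hw.ne', Finset.mem_univ _⟩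
    have heq := Finset.eq_of_subset_of_card_le hsub (by
      rw [SimpleGraph.card_neighborFinset_eq_degree, hdeg',
        Finset.card_erase_of_mem (Finset.mem_univ _)]
      simp [pik, z])
    have : v ∈ G.neighborFinset z := by rw [heq]; simp [hv]
    exact ((SimpleGraph.mem_neighborFinset _ _ _).1 this).symm
  have hleaf : ∀ v : Fin n, 2 * k - 3 < (v : ℕ) → ∀ w, G.Adj v w → w = z := by
    intro v hv w hw
    have hc : (G.neighborFinset v).card = 1 := by
      rw [SimpleGraph.card_neighborFinset_eq_degree, hdeg', pik, if_neg (by omega),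
        if_neg (by omega)]
    have hvz : v ≠ z := by
      rintro rfl
      simp [z] at hv
    exact Finset.card_le_one.1 hc.le w (by simpa using hw) z (by simpa using hz v hvz)
  -- The copy of `K_k` has at least `k - 1` vertices other than `0`.
  obtain ⟨A, hAsub, hA⟩ : ∃ A ⊆ (Finset.univ.image f).erase z, A.card = k - 1 := by
    refine Finset.exists_subset_card_eq ?_
    have := Finset.pred_card_le_card_erase (s := Finset.univ.image f) (a := z)
    rwa [Finset.card_image_of_injective _ hf, Finset.card_univ, Fintype.card_fin] at this
  have hcl : ∀ u ∈ A, ∀ v ∈ A, u ≠ v → G.Adj u v := by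
    intro u hu v hv huv
    obtain ⟨-, hu⟩ := Finset.mem_erase.1 (hAsub hu)
    obtain ⟨-, hv⟩ := Finset.mem_erase.1 (hAsub hv)
    obtain ⟨i, -, rfl⟩ := Finset.mem_image.1 hu
    obtain ⟨j, -, rfl⟩ := Finset.mem_image.1 hv
    exact hadj (by simpa using fun h => huv (congrArg f h))
  have hAz : ∀ v ∈ A, v ≠ z := fun v hv => (Finset.mem_erase.1 (hAsub hv)).1
  let C : Finset (Fin n) := (Finset.Iic ⟨2 * k - 3, hn⟩).erase z
  have hmemC : ∀ v : Fin n, v ∈ C ↔ v ≠ z ∧ (v : ℕ) ≤ 2 * k - 3 := by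
    intro v
    simp [C, Fin.le_def]
  have hC : C.card = 2 * k - 3 := by
    rw [Finset.card_erase_of_mem (by simp [z, Fin.le_def]), Fin.card_Iic]
    rfl
  have hAC : A ⊆ C := by
    intro v hv
    rw [hmemC]
    refine ⟨hAz v hv, ?_⟩
    by_contra! hlt
    -- A leaf has no neighbour other than `0`, but `A` has a further vertex.
    obtain ⟨w, hw, hwv⟩ := Finset.exists_mem_ne (by omega : 1 < A.card) v
    exact hAz w hw (hleaf v hlt w (hcl v hv w hw hwv.symm))
  have hdegC : ∀ v ∈ C, G.degree v = 2 * k - 5 := by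
    intro v hv
    obtain ⟨h0, h1⟩ := (hmemC v).1 hv
    have : (v : ℕ) ≠ 0 := fun h => h0 (Fin.ext h)
    rw [hdeg', pik, if_neg this, if_pos h1]
  refine no_core_clique G hk z A (C \ A) Finset.disjoint_sdiff (fun h => hAz z h rfl)
    (by simp [C]) hA ?_ (fun v hv => hdegC v (hAC hv))
    (fun v hv => hdegC v (Finset.sdiff_subset hv)) (fun v hv => hz v (hAz v hv)) ?_ hcl
  · rw [Finset.card_sdiff_of_subset hAC, hA, hC]
    omega
  · intro v hv w hw
    have hvz := ((hmemC v).1 (Finset.sdiff_subset hv)).1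
    by_cases hwz : w = z
    · exact Or.inl hwz
    · have hwC : w ∈ C := by
        rw [hmemC]
        refine ⟨hwz, ?_⟩
        by_contra! hlt
        exact hvz (hleaf w hlt v hw.symm)
      by_cases hwA : w ∈ A
      · exact Or.inr (Or.inl hwA)
      · exact Or.inr (Or.inr (Finset.mem_sdiff.2 ⟨hwC, hwA⟩))

/-- For k ≥ 4 and n sufficiently large (n ≥ 4k²), the sequence
π_k = (n−1, (2k−5)^{2k−3}, 1^{n−2k+2}) is graphic, is degree sufficient for K_k,
but is not potentially K_k-graphic. -/
theorem stmt_9 {k n : ℕ} (hk : 4 ≤ k) (hkn : k ≤ n) (hn : 4 * k ^ 2 ≤ n) :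
    IsGraphic (pik k n) ∧
    (∀ i : Fin k, k - 1 ≤ pik k n (Fin.castLE hkn i)) ∧
    ¬ PotentiallyGraphic (pik k n) (⊤ : SimpleGraph (Fin k)) := by
  have hn' : 2 * k - 3 < n := by
    have : 2 * k ≤ 4 * k ^ 2 := by nlinarith
    omega
  refine ⟨pik_graphic hk hn', fun i => ?_, pik_not_potentially hk hn'⟩
  have := i.isLt
  simp only [pik, Fin.val_castLE]
  split_ifs <;> omega
end

section
/- Let k ≥ 4 and let n be sufficiently large. Let π_k = (n−1, (2k−5)^{2k−3}, 1^{n−2k+2}) and let π̃_2(K_k,n) = ((n−1)^{k−2}, (k−2)^{n−k+2}). If b is a nonnegative integer such that π_k is ([k−1, k], b)-close to π̃_2(K_k,n), then b ≥ k(k−3). (Note that i*(K_k) = 2, so this shows the editing amount in the closeness theorem for sequences that are not potentially H-graphic must be at least on the order of k² for H = K_k.) -/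
/-- For k ≥ 4 and n large, if π_k is ([k−1,k], b)-close to
π̃_2(K_k,n) = ((n−1)^{k−2}, (k−2)^{n−k+2}), then b ≥ k(k−3). -/
theorem stmt_12 {k n : ℕ} (hk : 4 ≤ k) (hn : 4 * k ^ 2 ≤ n) (b : ℕ)
    (hclose : CloseTo (pik k n) (k - 1) k b
      (fun t : Fin n => if (t : ℕ) < k - 2 then n - 1 else k - 2)) :
    k * (k - 3) ≤ b := by
  obtain ⟨e, -, hsum, hmaj⟩ := hclose
  have hn2 : 2 * k ≤ n := by nlinarith
  -- The `k` zero-based positions `k - 2, …, 2 * k - 3`.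
  let f : Fin k ↪ Fin n :=
    ⟨fun i => ⟨k - 2 + i, by omega⟩, fun i j h => by
      have := congrArg Fin.val h
      simp only at this
      exact Fin.ext (by omega)⟩
  have he : ∀ i : Fin k, k - 3 ≤ e (f i) := by
    intro i
    have hi := i.isLt
    have hv : ((f i : Fin n) : ℕ) = k - 2 + i := rfl
    -- Leveling off only touches the positions `k - 2` and `k - 1`, where `π_k` is already constant.
    have hl : levelOff (pik k n) (k - 1) k (f i) = 2 * k - 5 := by
      unfold levelOff pik
      split_ifs <;> simp only [hv] at * <;> omega
    have h := hmaj (f i)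
    simp only [hl, hv] at h
    rw [if_neg (by omega)] at h
    omega
  calc k * (k - 3) = ∑ _i : Fin k, (k - 3) := by simp
    _ ≤ ∑ i : Fin k, e (f i) := Finset.sum_le_sum fun i _ => he i
    _ = ∑ t ∈ Finset.univ.map f, e t := by rw [Finset.sum_map]
    _ ≤ ∑ t, e t := Finset.sum_le_sum_of_subset (Finset.subset_univ _)
    _ ≤ b := hsum
end
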